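/- arXiv:2511.23175 — 7 statements merged into one kernel-verified Lean document; each statement's English description precedes it below -/
import Mathlib

section
/- Let μ be a finitely supported probability measure on ℝ and let γ ∈ (0,1]. Then the Value-at-Risk at level γ is the left limit of the α–γ expectation as α increases to γ: the function α ↦ (1/(γ−α)) ∫_α^γ F⁻¹(s) ds, defined for α ∈ [0,γ), tends to F⁻¹(γ) as α tends to γ from the left (within [0,γ)). -/
open MeasureTheory

/-- Generalized inverse (quantile function) of the cdf `t ↦ μ (Iic t)`. -/
noncomputable def Finv (μ : Measure ℝ) (q : ℝ) : ℝ :=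
  sInf {t : ℝ | q ≤ (μ (Set.Iic t)).toReal}

/-- The cdf of a finitely supported measure takes finitely many values. -/
theorem finite_range_measure_Iic (μ : Measure ℝ) (s : Finset ℝ)
    (hs : μ ((↑s : Set ℝ)ᶜ) = 0) :
    (Set.range fun t : ℝ => (μ (Set.Iic t)).toReal).Finite := by
  refine (s.finite_toSet.powerset.image fun A : Set ℝ => (μ A).toReal).subset ?_
  rintro _ ⟨t, rfl⟩
  exact ⟨↑s ∩ Set.Iic t, Set.inter_subset_left,
    congrArg ENNReal.toReal (Measure.measure_inter_eq_of_ae (mem_ae_iff.2 hs))⟩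

/-- The quantile function of a finitely supported measure is constant on some interval `(l, γ]`. -/
theorem exists_Finv_eq_on_Ioc (μ : Measure ℝ) (s : Finset ℝ)
    (hs : μ ((↑s : Set ℝ)ᶜ) = 0) (γ : ℝ) :
    ∃ l < γ, ∀ q ∈ Set.Ioc l γ, Finv μ q = Finv μ γ := by
  have hgap : ∀ᶠ q in nhds γ, ∀ v ∈ Set.range fun t : ℝ => (μ (Set.Iic t)).toReal,
      v < γ → v < q :=
    (Filter.eventually_all_finite (finite_range_measure_Iic μ s hs)).2 fun v _ => by
      by_cases hv : v < γ
      · filter_upwards [lt_mem_nhds hv] with q hq _ using hq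
      · exact Filter.Eventually.of_forall fun q h => absurd h hv
  obtain ⟨l, hl, hsub⟩ := exists_Ioc_subset_of_mem_nhds hgap (exists_lt γ)
  refine ⟨l, hl, fun q hq => congrArg sInf (Set.ext fun t => ⟨fun ht => ?_, hq.2.trans⟩)⟩
  by_contra hlt
  exact (hsub hq _ ⟨t, rfl⟩ (not_le.1 hlt)).not_ge ht

/-- For a finitely supported probability measure `μ` on `ℝ` and `γ ∈ (0,1]`,
the α–γ expectation `α ↦ (1/(γ−α)) ∫_α^γ F⁻¹(s) ds` tends to `F⁻¹(γ)` as
`α → γ` from the left within `[0,γ)`. -/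
theorem var_is_left_limit_of_alpha_gamma_expectation
    (μ : Measure ℝ) [IsProbabilityMeasure μ]
    (hfin : ∃ s : Finset ℝ, μ ((↑s : Set ℝ)ᶜ) = 0)
    (γ : ℝ) (hγ0 : 0 < γ) (hγ1 : γ ≤ 1) :
    Filter.Tendsto (fun α : ℝ => (1 / (γ - α)) * ∫ s in α..γ, Finv μ s)
      (nhdsWithin γ (Set.Ico 0 γ)) (nhds (Finv μ γ)) := by
  obtain ⟨s, hs⟩ := hfin
  obtain ⟨l, hl, hconst⟩ := exists_Finv_eq_on_Ioc μ s hs γ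
  refine tendsto_const_nhds.congr' ?_
  filter_upwards [self_mem_nhdsWithin, mem_nhdsWithin_of_mem_nhds (lt_mem_nhds hl)] with α hα hlα
  have hne : γ - α ≠ 0 := (sub_pos.2 hα.2).ne'
  have hint : ∫ q in α..γ, Finv μ q = ∫ _ in α..γ, Finv μ γ :=
    intervalIntegral.integral_congr fun q hq => by
      rw [Set.uIcc_of_le hα.2.le] at hq
      exact hconst q ⟨hlα.trans_le hq.1, hq.2⟩
  rw [hint, intervalIntegral.integral_const, smul_eq_mul]
  field_simp
end

section
/- Let 0 ≤ α < γ ≤ 1 and suppose that no subset S ⊆ {1,…,n} satisfies α ≤ Σ_{i∈S} p_i < γ. Then for every T ∈ ℝ^n, the α–γ expectation equals the Value-at-Risk at level γ: E_{α,γ}(μ_T) = F⁻¹(γ). -/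
open MeasureTheory

/-- The discrete measure `μ_T = Σ_i p_i δ_{T_i}`. -/
noncomputable def muT {n : ℕ} (p T : Fin n → ℝ) : Measure ℝ :=
  ∑ i, ENNReal.ofReal (p i) • Measure.dirac (T i)

/-- Generalized inverse of the cdf `t ↦ μ_T (Iic t)` of `μ_T`. -/
noncomputable def dFinv {n : ℕ} (p T : Fin n → ℝ) (q : ℝ) : ℝ :=
  sInf {t : ℝ | q ≤ (muT p T (Set.Iic t)).toReal}

/-- The α–γ expectation of `μ_T`. -/
noncomputable def dEag {n : ℕ} (p T : Fin n → ℝ) (a g : ℝ) : ℝ :=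
  (1 / (g - a)) * ∫ s in a..g, dFinv p T s

/-- The cdf of `muT p T` at `t` is the sum of the weights of the atoms lying in `(-∞, t]`. -/
lemma muT_Iic_toReal {n : ℕ} {p : Fin n → ℝ} (hp : ∀ i, 0 ≤ p i) (T : Fin n → ℝ) (t : ℝ) :
    (muT p T (Set.Iic t)).toReal = ∑ i with T i ≤ t, p i := by
  have hterm (i : Fin n) : ENNReal.ofReal (p i) * Set.indicator (Set.Iic t) 1 (T i) =
      ENNReal.ofReal (if T i ≤ t then p i else 0) := by
    by_cases h : T i ≤ t <;> simp [h]
  simp only [muT, Measure.coe_finsetSum, Finset.sum_apply, Measure.smul_apply, smul_eq_mul,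
    Measure.dirac_apply' _ measurableSet_Iic, hterm]
  have hnonneg (i : Fin n) : 0 ≤ if T i ≤ t then p i else 0 := by
    split_ifs
    exacts [hp i, le_rfl]
  rw [← ENNReal.ofReal_sum_of_nonneg fun i _ => hnonneg i,
    ENNReal.toReal_ofReal (Finset.sum_nonneg fun i _ => hnonneg i), Finset.sum_filter]

/-- The generalized inverse is constant on `[α, γ]` when the cdf takes no value in `[α, γ)`. -/
lemma dFinv_eq_of_no_jump {n : ℕ} {p : Fin n → ℝ} (hp : ∀ i, 0 ≤ p i) {α γ s : ℝ}
    (hno : ¬ ∃ S : Finset (Fin n), α ≤ ∑ i ∈ S, p i ∧ ∑ i ∈ S, p i < γ)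
    (hs : s ∈ Set.Icc α γ) (T : Fin n → ℝ) : dFinv p T s = dFinv p T γ := by
  unfold dFinv
  congr 1
  ext t
  simp only [Set.mem_ofPred_eq, muT_Iic_toReal hp]
  refine ⟨fun h => ?_, hs.2.trans⟩
  by_contra! hlt
  exact hno ⟨_, hs.1.trans h, hlt⟩

/-- If no subset `S ⊆ {1,…,n}` satisfies `α ≤ Σ_{i∈S} p_i < γ`, then
`E_{α,γ}(μ_T) = F⁻¹(γ)` for every `T`. -/
theorem alpha_gamma_expectation_eq_VaR_of_no_jump
    {n : ℕ} (hn : 1 ≤ n) (p : Fin n → ℝ)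
    (hp : ∀ i, 0 < p i) (hsum : ∑ i, p i = 1)
    (α γ : ℝ) (h0 : 0 ≤ α) (h1 : α < γ) (h2 : γ ≤ 1)
    (hno : ¬ ∃ S : Finset (Fin n), α ≤ ∑ i ∈ S, p i ∧ ∑ i ∈ S, p i < γ) :
    ∀ T : Fin n → ℝ, dEag p T α γ = dFinv p T γ := by
  intro T
  have hconst : ∫ s in α..γ, dFinv p T s = ∫ _ in α..γ, dFinv p T γ :=
    intervalIntegral.integral_congr fun s hs =>
      dFinv_eq_of_no_jump (fun i => (hp i).le) hno (Set.uIcc_of_le h1.le ▸ hs) T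
  rw [dEag, hconst, intervalIntegral.integral_const, smul_eq_mul, ← mul_assoc,
    one_div_mul_cancel (sub_pos.2 h1).ne', one_mul]
end

section
/- Assume the entries of T are pairwise distinct, and let 0 ≤ α < γ ≤ 1. Consider the max–min problem max_{w∈W_α} min_{w'∈W_γ} g(w,w'), where g(w,w') = Σ_{i=1}^n T_i p_i (w_i − w'_i). If (w*, w'*) is an optimal pair — i.e., w* ∈ W_α attains the supremum over W_α of the function w ↦ inf_{w'∈W_γ} g(w,w'), and w'* ∈ W_γ attains the infimum over W_γ of w' ↦ g(w*,w') — then w*_i ≥ w'*_i for every i ∈ {1,…,n}. -/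
/-- The polytope `W_β = {w ∈ [0,1]^n : Σ_i w_i p_i = 1 − β}`. -/
def Wset {n : ℕ} (p : Fin n → ℝ) (β : ℝ) : Set (Fin n → ℝ) :=
  {w | (∀ i, w i ∈ Set.Icc (0:ℝ) 1) ∧ ∑ i, w i * p i = 1 - β}

/-- Exchange property: a maximizer of `Σ_i T_i p_i v_i` over `W_β` puts no weight on `i` unless
it is saturated at every `j` with `T i < T j`. -/
theorem Wset_maximizer_exchange {n : ℕ} {p T u : Fin n → ℝ} {β : ℝ} (hp : ∀ i, 0 < p i)
    (hu : u ∈ Wset p β)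
    (hmax : ∀ v ∈ Wset p β, ∑ k, T k * p k * v k ≤ ∑ k, T k * p k * u k)
    {i j : Fin n} (hij : T i < T j) : u i = 0 ∨ u j = 1 := by
  by_contra! hne
  obtain ⟨hi0, hj1⟩ := hne
  obtain ⟨hbox, hmass⟩ := hu
  have hne : i ≠ j := by rintro rfl; exact lt_irrefl _ hij
  have hpi := hp i
  have hpj := hp j
  have hui : 0 < u i := lt_of_le_of_ne (hbox i).1 (Ne.symm hi0)
  have huj : 0 < 1 - u j := sub_pos.2 (lt_of_le_of_ne (hbox j).2 hj1)
  obtain ⟨δ, hδ, hδi, hδj⟩ : ∃ δ, 0 < δ ∧ δ ≤ u i * p i ∧ δ ≤ (1 - u j) * p j :=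
    ⟨min (u i * p i) ((1 - u j) * p j), lt_min (by positivity) (by positivity),
      min_le_left _ _, min_le_right _ _⟩
  have hδi' : δ / p i ≤ u i := (div_le_iff₀ hpi).2 hδi
  have hδj' : δ / p j ≤ 1 - u j := (div_le_iff₀ hpj).2 hδj
  have hdi : 0 < δ / p i := by positivity
  have hdj : 0 < δ / p j := by positivity
  set v : Fin n → ℝ := u + Pi.single j (δ / p j) - Pi.single i (δ / p i) with hv
  have hsum : ∀ c : Fin n → ℝ,
      ∑ k, c k * v k = ∑ k, c k * u k + c j * (δ / p j) - c i * (δ / p i) := by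
    intro c
    simp [hv, mul_add, mul_sub, Finset.sum_add_distrib, Finset.sum_sub_distrib, Pi.single_apply]
  have hvmem : v ∈ Wset p β := by
    refine ⟨fun k => ?_, ?_⟩
    · have hk := hbox k
      by_cases hki : k = i
      · subst hki
        simp only [hv, Pi.sub_apply, Pi.add_apply, Pi.single_eq_same, Pi.single_eq_of_ne hne]
        exact ⟨by linarith, by linarith [hk.2]⟩
      · by_cases hkj : k = j
        · subst hkj
          simp only [hv, Pi.sub_apply, Pi.add_apply, Pi.single_eq_same, Pi.single_eq_of_ne hki]
          exact ⟨by linarith [hk.1], by linarith⟩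
        · simpa [hv, hki, hkj] using hk
    · have h := hsum p
      rw [mul_div_cancel₀ _ hpj.ne', mul_div_cancel₀ _ hpi.ne'] at h
      simp only [mul_comm (p _)] at h
      linarith
  have h := hmax v hvmem
  rw [hsum fun k => T k * p k, mul_assoc, mul_assoc, mul_div_cancel₀ _ hpj.ne',
    mul_div_cancel₀ _ hpi.ne'] at h
  nlinarith [mul_pos (sub_pos.2 hij) hδ]

/-- For pairwise-distinct `T` and `0 ≤ α < γ ≤ 1`, any optimal pair `(w*, w'*)`
of the max–min problem `max_{w∈W_α} min_{w'∈W_γ} Σ_i T_i p_i (w_i − w'_i)`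
satisfies `w*_i ≥ w'*_i` for every `i`. -/
theorem maxmin_optimal_pair_componentwise
    {n : ℕ} (hn : 1 ≤ n) (p T : Fin n → ℝ)
    (hp : ∀ i, 0 < p i) (hsum : ∑ i, p i = 1)
    (hT : Function.Injective T)
    (α γ : ℝ) (h0 : 0 ≤ α) (h1 : α < γ) (h2 : γ ≤ 1)
    (w ws : Fin n → ℝ)
    (hw : w ∈ Wset p α)
    (hmax : ∀ u ∈ Wset p α,
      sInf ((fun w' => ∑ i, T i * p i * (u i - w' i)) '' Wset p γ) ≤
        sInf ((fun w' => ∑ i, T i * p i * (w i - w' i)) '' Wset p γ))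
    (hws : ws ∈ Wset p γ)
    (hmin : ∀ w' ∈ Wset p γ,
      ∑ i, T i * p i * (w i - ws i) ≤ ∑ i, T i * p i * (w i - w' i)) :
    ∀ i, ws i ≤ w i := by
  have hsplit : ∀ a b : Fin n → ℝ, ∑ i, T i * p i * (a i - b i) =
      ∑ i, T i * p i * a i - ∑ i, T i * p i * b i := fun a b => by
    simp only [mul_sub, Finset.sum_sub_distrib]
  simp only [hsplit] at hmin hmax
  have hwsmax : ∀ v ∈ Wset p γ, ∑ k, T k * p k * v k ≤ ∑ k, T k * p k * ws k :=
    fun v hv => by linarith [hmin v hv]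
  have hinf : ∀ u : Fin n → ℝ,
      sInf ((fun w' : Fin n → ℝ => ∑ i, T i * p i * u i - ∑ i, T i * p i * w' i) '' Wset p γ) =
        ∑ i, T i * p i * u i - ∑ i, T i * p i * ws i := fun u =>
    IsLeast.csInf_eq ⟨⟨ws, hws, rfl⟩, by
      rintro _ ⟨v, hv, rfl⟩
      exact sub_le_sub_left (hwsmax v hv) _⟩
  simp only [hinf] at hmax
  have hwmax : ∀ v ∈ Wset p α, ∑ k, T k * p k * v k ≤ ∑ k, T k * p k * w k :=
    fun v hv => by linarith [hmax v hv]
  intro i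
  by_contra! hi
  obtain ⟨j, hj⟩ : ∃ j, ws j < w j := by
    by_contra! hle
    have := Finset.sum_le_sum fun k (_ : k ∈ Finset.univ) =>
      mul_le_mul_of_nonneg_right (hle k) (hp k).le
    linarith [hw.2, hws.2]
  have hij : i ≠ j := by rintro rfl; exact lt_asymm hi hj
  rcases lt_or_gt_of_ne (hT.ne hij) with h | h
  · rcases Wset_maximizer_exchange hp hws hwsmax h with h | h
    · linarith [(hw.1 i).1]
    · linarith [(hw.1 j).2]
  · rcases Wset_maximizer_exchange hp hw hwmax h with h | h
    · linarith [(hws.1 j).1]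
    · linarith [(hws.1 i).2]
end

section
/- Let α ∈ [0,1). Then the supremum of the linear functional w ↦ Σ_{i=1}^n T_i w_i p_i over the polytope W_α equals the integral of the quantile function of μ_T over [α,1]: sup{Σ_{i=1}^n T_i w_i p_i : w ∈ W_α} = ∫_α^1 F⁻¹(s) ds. In particular, E_{α,1}(μ_T) = (1/(1−α)) · sup{Σ_{i=1}^n T_i w_i p_i : w ∈ W_α}. -/
open MeasureTheory

open ProbabilityTheory in
/-- The generalized inverse of the cdf satisfies the Galois property on `(0, 1]`. -/
theorem dFinv_le_iff {n : ℕ} {p T : Fin n → ℝ} [IsProbabilityMeasure (muT p T)] {s : ℝ}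
    (hs : 0 < s) (hne : ∃ t, s ≤ (muT p T).real (Set.Iic t)) (t : ℝ) :
    dFinv p T s ≤ t ↔ s ≤ (muT p T).real (Set.Iic t) := by
  have hset : {t : ℝ | s ≤ (muT p T (Set.Iic t)).toReal} = {t | s ≤ cdf (muT p T) t} := by
    ext t; simp [cdf_eq_real, Measure.real]
  have hbdd : BddBelow {t | s ≤ cdf (muT p T) t} := by
    obtain ⟨b, hb⟩ := ((tendsto_cdf_atBot (muT p T)).eventually (gt_mem_nhds hs)).exists
    refine ⟨b, fun t ht => ?_⟩
    by_contra! hlt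
    exact absurd ((ht.trans (monotone_cdf _ hlt.le)).trans_lt hb) (lt_irrefl _)
  simp only [← cdf_eq_real] at hne ⊢
  rw [dFinv, hset]
  refine ⟨fun h => ?_, fun h => csInf_le hbdd h⟩
  have hright : Filter.Tendsto (cdf (muT p T)) (nhdsWithin t (Set.Ioi t))
      (nhds (cdf (muT p T) t)) :=
    (((cdf (muT p T)).right_continuous t).mono Set.Ioi_subset_Ici_self)
  refine ge_of_tendsto hright ?_
  filter_upwards [self_mem_nhdsWithin] with u hu
  obtain ⟨v, hv, hvu⟩ := exists_lt_of_csInf_lt hne (h.trans_lt hu)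
  exact le_trans hv (monotone_cdf _ hvu.le)

theorem isProbabilityMeasure_muT {n : ℕ} {p : Fin n → ℝ} (T : Fin n → ℝ)
    (hp : ∀ i, 0 ≤ p i) (hsum : ∑ i, p i = 1) : IsProbabilityMeasure (muT p T) := by
  constructor
  simp [muT, ← ENNReal.ofReal_sum_of_nonneg (fun i _ => hp i), hsum]

theorem muT_real_apply {n : ℕ} {p : Fin n → ℝ} (T : Fin n → ℝ) (hp : ∀ i, 0 ≤ p i)
    {A : Set ℝ} (hA : MeasurableSet A) :
    (muT p T).real A = ∑ i, A.indicator (fun _ => p i) (T i) := by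
  classical
  rw [Measure.real, muT, Measure.finsetSum_apply, ENNReal.toReal_sum]
  · refine Finset.sum_congr rfl fun i _ => ?_
    by_cases h : T i ∈ A <;> simp [hA, h, hp i]
  · intro i _
    by_cases h : T i ∈ A <;> simp [hA, h]

theorem exists_muT_real_Iic_eq_one {n : ℕ} {p : Fin n → ℝ} (T : Fin n → ℝ)
    (hp : ∀ i, 0 ≤ p i) (hsum : ∑ i, p i = 1) :
    ∃ i, (muT p T).real (Set.Iic (T i)) = 1 := by
  have hne : (Finset.univ : Finset (Fin n)).Nonempty := by
    by_contra h
    rw [Finset.not_nonempty_iff_eq_empty] at h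
    simp [h] at hsum
  obtain ⟨m, -, hm⟩ := Finset.exists_max_image Finset.univ T hne
  refine ⟨m, ?_⟩
  rw [muT_real_apply T hp measurableSet_Iic, ← hsum]
  exact Finset.sum_congr rfl fun i hi =>
    Set.indicator_of_mem (show T i ∈ Set.Iic (T m) from hm i hi) _

/-- Every level `α ∈ [0, 1]` has a quantile `c`, with `μ_T (Iio c) ≤ α ≤ μ_T (Iic c)`. -/
theorem exists_quantile {n : ℕ} {p : Fin n → ℝ} (T : Fin n → ℝ)
    (hp : ∀ i, 0 ≤ p i) (hsum : ∑ i, p i = 1) {α : ℝ} (h0 : 0 ≤ α) (h1 : α ≤ 1) :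
    ∃ c, (muT p T).real (Set.Iio c) ≤ α ∧ α ≤ (muT p T).real (Set.Iic c) := by
  classical
  obtain ⟨m, hm⟩ := exists_muT_real_Iic_eq_one T hp hsum
  obtain ⟨k, hk, hmin⟩ := Finset.exists_min_image
    (Finset.univ.filter fun i => α ≤ (muT p T).real (Set.Iic (T i))) T
    ⟨m, by simp [hm, h1]⟩
  simp only [Finset.mem_filter, Finset.mem_univ, true_and] at hk hmin
  refine ⟨T k, ?_, hk⟩
  rcases (Finset.univ.filter fun i => T i < T k).eq_empty_or_nonempty with he | hne
  · rw [muT_real_apply T hp measurableSet_Iio, Finset.sum_eq_zero]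
    · exact h0
    · intro i _
      refine Set.indicator_of_notMem (fun hi => ?_) _
      simpa [he] using
        (show i ∈ Finset.univ.filter fun i => T i < T k from by simpa using hi)
  · obtain ⟨j, hj, hmax⟩ := Finset.exists_max_image _ T hne
    simp only [Finset.mem_filter, Finset.mem_univ, true_and] at hj hmax
    have hlt : (muT p T).real (Set.Iic (T j)) < α := by
      by_contra! h
      exact absurd (hmin j h) (not_le.2 hj)
    refine le_trans ?_ hlt.le
    rw [muT_real_apply T hp measurableSet_Iio, muT_real_apply T hp measurableSet_Iic]
    refine Finset.sum_le_sum fun i _ => ?_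
    by_cases hi : T i < T k
    · rw [Set.indicator_of_mem (show T i ∈ Set.Iio (T k) from hi),
        Set.indicator_of_mem (show T i ∈ Set.Iic (T j) from hmax i hi)]
    · rw [Set.indicator_of_notMem (show T i ∉ Set.Iio (T k) from hi)]
      exact Set.indicator_nonneg (fun _ _ => hp i) _

theorem dFinv_le_iff_of_mem_Ioc {n : ℕ} {p : Fin n → ℝ} (T : Fin n → ℝ)
    (hp : ∀ i, 0 ≤ p i) (hsum : ∑ i, p i = 1) {s : ℝ} (hs : s ∈ Set.Ioc (0 : ℝ) 1) (t : ℝ) :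
    dFinv p T s ≤ t ↔ s ≤ (muT p T).real (Set.Iic t) := by
  have := isProbabilityMeasure_muT T hp hsum
  obtain ⟨m, hm⟩ := exists_muT_real_Iic_eq_one T hp hsum
  exact dFinv_le_iff hs.1 ⟨T m, hm ▸ hs.2⟩ t

theorem monotoneOn_dFinv {n : ℕ} {p : Fin n → ℝ} (T : Fin n → ℝ)
    (hp : ∀ i, 0 ≤ p i) (hsum : ∑ i, p i = 1) :
    MonotoneOn (dFinv p T) (Set.Ioc 0 1) := by
  intro a ha b hb hab
  rw [dFinv_le_iff_of_mem_Ioc T hp hsum ha]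
  exact hab.trans ((dFinv_le_iff_of_mem_Ioc T hp hsum hb _).1 le_rfl)

/-- The quantile function pushes the uniform measure on `(0, 1]` forward to `μ_T`. -/
theorem map_dFinv_eq_muT {n : ℕ} {p : Fin n → ℝ} (T : Fin n → ℝ)
    (hp : ∀ i, 0 ≤ p i) (hsum : ∑ i, p i = 1) :
    (volume.restrict (Set.Ioc (0 : ℝ) 1)).map (dFinv p T) = muT p T := by
  have := isProbabilityMeasure_muT T hp hsum
  have hmeas : AEMeasurable (dFinv p T) (volume.restrict (Set.Ioc (0 : ℝ) 1)) :=
    aemeasurable_restrict_of_monotoneOn measurableSet_Ioc (monotoneOn_dFinv T hp hsum)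
  refine Measure.ext_of_Iic _ _ fun t => ?_
  rw [Measure.map_apply_of_aemeasurable hmeas measurableSet_Iic,
    Measure.restrict_apply' measurableSet_Ioc]
  have hset : dFinv p T ⁻¹' Set.Iic t ∩ Set.Ioc 0 1 =
      Set.Ioc 0 ((muT p T).real (Set.Iic t)) := by
    ext s
    constructor
    · rintro ⟨h, hs⟩
      exact ⟨hs.1, (dFinv_le_iff_of_mem_Ioc T hp hsum hs t).1 h⟩
    · rintro ⟨hs, h⟩
      have hs1 : s ∈ Set.Ioc (0 : ℝ) 1 := ⟨hs, h.trans measureReal_le_one⟩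
      exact ⟨(dFinv_le_iff_of_mem_Ioc T hp hsum hs1 t).2 h, hs1⟩
  rw [hset, Real.volume_Ioc, sub_zero, ofReal_measureReal]

theorem integral_muT {n : ℕ} {p : Fin n → ℝ} (T : Fin n → ℝ) (hp : ∀ i, 0 ≤ p i)
    (g : ℝ → ℝ) : ∫ x, g x ∂(muT p T) = ∑ i, p i * g (T i) := by
  rw [muT, integral_finsetSum_measure]
  · refine Finset.sum_congr rfl fun i _ => ?_
    rw [integral_smul_measure, integral_dirac, ENNReal.toReal_ofReal (hp i), smul_eq_mul]
  · intro i _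
    exact (integrable_dirac (by simp)).smul_measure ENNReal.ofReal_ne_top

theorem integrable_muT {n : ℕ} {p : Fin n → ℝ} (T : Fin n → ℝ) (g : ℝ → ℝ) :
    Integrable g (muT p T) := by
  rw [muT, integrable_finsetSum_measure]
  exact fun i _ => (integrable_dirac (by simp)).smul_measure ENNReal.ofReal_ne_top

/-- The tail integral of the quantile function in terms of the excess over a quantile. -/
theorem integral_dFinv_eq {n : ℕ} {p : Fin n → ℝ} (T : Fin n → ℝ)
    (hp : ∀ i, 0 ≤ p i) (hsum : ∑ i, p i = 1) {α c : ℝ} (h0 : 0 ≤ α) (h1 : α ≤ 1)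
    (hlt : (muT p T).real (Set.Iio c) ≤ α) (hle : α ≤ (muT p T).real (Set.Iic c)) :
    ∫ s in α..(1 : ℝ), dFinv p T s = c * (1 - α) + ∑ i, p i * max (T i - c) 0 := by
  have := isProbabilityMeasure_muT T hp hsum
  have hmeas : AEMeasurable (dFinv p T) (volume.restrict (Set.Ioc (0 : ℝ) 1)) :=
    aemeasurable_restrict_of_monotoneOn measurableSet_Ioc (monotoneOn_dFinv T hp hsum)
  have hint : IntegrableOn (dFinv p T) (Set.Ioc 0 1) := by
    have h := integrable_muT (p := p) T id
    rw [← map_dFinv_eq_muT T hp hsum] at h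
    exact h.comp_aemeasurable hmeas
  have hsub : Set.Ioc α 1 ⊆ Set.Ioc 0 1 := Set.Ioc_subset_Ioc_left h0
  have htail : ∀ s ∈ Set.Ioc α 1, c ≤ dFinv p T s := by
    intro s hs
    by_contra! h
    have h2 := (dFinv_le_iff_of_mem_Ioc T hp hsum (hsub hs) _).1 le_rfl
    have h3 : (muT p T).real (Set.Iic (dFinv p T s)) ≤ (muT p T).real (Set.Iio c) :=
      measureReal_mono (Set.Iic_subset_Iio.2 h)
    linarith [hs.1]
  have hexcess : ∫ s in Set.Ioc (0 : ℝ) 1, max (dFinv p T s - c) 0 =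
      ∑ i, p i * max (T i - c) 0 := by
    rw [← integral_muT T hp (fun x => max (x - c) 0), ← map_dFinv_eq_muT T hp hsum,
      integral_map hmeas (by fun_prop)]
  have hrestrict : ∫ s in Set.Ioc (0 : ℝ) 1, max (dFinv p T s - c) 0 =
      ∫ s in Set.Ioc α 1, (dFinv p T s - c) := by
    rw [setIntegral_eq_of_subset_of_forall_sdiff_eq_zero measurableSet_Ioc hsub]
    · refine setIntegral_congr_fun measurableSet_Ioc fun s hs => ?_
      exact max_eq_left (sub_nonneg.2 (htail s hs))
    · rintro s ⟨hs, hs'⟩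
      have hsα : s ≤ α := by
        by_contra! h
        exact hs' ⟨h, hs.2⟩
      exact max_eq_right (sub_nonpos.2
        ((dFinv_le_iff_of_mem_Ioc T hp hsum hs c).2 (hsα.trans hle)))
  rw [← hexcess, hrestrict, integral_sub (hint.mono_set hsub) (by simp),
    intervalIntegral.integral_of_le h1]
  simp [h1]
  ring

/-- Some weight vector selecting all points above the quantile `c` and none below it lies in
the polytope. -/
theorem exists_mem_Wset_of_quantile {n : ℕ} {p : Fin n → ℝ} (T : Fin n → ℝ)
    (hp : ∀ i, 0 ≤ p i) (hsum : ∑ i, p i = 1) {α c : ℝ}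
    (hlt : (muT p T).real (Set.Iio c) ≤ α) (hle : α ≤ (muT p T).real (Set.Iic c)) :
    ∃ w ∈ Wset p α, ∀ i, (T i - c) * w i = max (T i - c) 0 := by
  classical
  obtain ⟨θ, hθ0, hθ1, hθ⟩ : ∃ θ : ℝ, 0 ≤ θ ∧ θ ≤ 1 ∧
      θ * (muT p T).real (Set.Iio c) + (1 - θ) * (muT p T).real (Set.Iic c) = α := by
    have hmem : α ∈ segment ℝ ((muT p T).real (Set.Iio c)) ((muT p T).real (Set.Iic c)) := by
      rw [segment_eq_Icc (hlt.trans hle)]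
      exact ⟨hlt, hle⟩
    obtain ⟨a, b, ha, hb, hab, h⟩ := hmem
    refine ⟨a, ha, by linarith, ?_⟩
    rw [← h, ← hab]
    simp
  refine ⟨fun i => if T i < c then 0 else if T i ≤ c then θ else 1, ⟨fun i => ?_, ?_⟩, ?_⟩
  · simp only
    split_ifs <;> simp [hθ0, hθ1]
  · rw [← hθ, muT_real_apply T hp measurableSet_Iio, muT_real_apply T hp measurableSet_Iic,
      ← hsum, Finset.mul_sum, Finset.mul_sum, ← Finset.sum_add_distrib,
      ← Finset.sum_sub_distrib]
    refine Finset.sum_congr rfl fun i _ => ?_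
    simp only [Set.indicator_apply, Set.mem_Iio, Set.mem_Iic]
    rcases lt_trichotomy (T i) c with h | h | h
    · simp only [h, h.le, if_true, hsum]
      ring
    · simp only [h, lt_irrefl, le_refl, if_true, if_false, hsum]
      ring
    · simp [h.not_ge, h.not_gt, hsum]
  · intro i
    rcases lt_trichotomy (T i) c with h | h | h
    · simp [h, h.le]
    · simp [h]
    · simp [h.not_ge, h.not_gt, h.le]

theorem sum_eq_of_mem_Wset {n : ℕ} {p w : Fin n → ℝ} (T : Fin n → ℝ) {α : ℝ}
    (hw : w ∈ Wset p α) (c : ℝ) :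
    ∑ i, T i * w i * p i = c * (1 - α) + ∑ i, p i * ((T i - c) * w i) := by
  rw [← hw.2, Finset.mul_sum, ← Finset.sum_add_distrib]
  exact Finset.sum_congr rfl fun i _ => by ring


/-- `sup{Σ_i T_i w_i p_i : w ∈ W_α} = ∫_α^1 F⁻¹(s) ds`, and consequently
`E_{α,1}(μ_T) = (1/(1−α)) · sup{Σ_i T_i w_i p_i : w ∈ W_α}`. -/
theorem sup_over_W_eq_integral_quantile
    {n : ℕ} (hn : 1 ≤ n) (p T : Fin n → ℝ)
    (hp : ∀ i, 0 < p i) (hsum : ∑ i, p i = 1)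
    (α : ℝ) (h0 : 0 ≤ α) (h1 : α < 1) :
    sSup ((fun w => ∑ i, T i * w i * p i) '' Wset p α) =
      (∫ s in α..(1:ℝ), dFinv p T s) ∧
    dEag p T α 1 =
      (1 / (1 - α)) * sSup ((fun w => ∑ i, T i * w i * p i) '' Wset p α) := by
  obtain ⟨c, hlt, hle⟩ := exists_quantile T (fun i => (hp i).le) hsum h0 h1.le
  have hsup : sSup ((fun w => ∑ i, T i * w i * p i) '' Wset p α) =
      ∫ s in α..(1 : ℝ), dFinv p T s := by
    rw [integral_dFinv_eq T (fun i => (hp i).le) hsum h0 h1.le hlt hle]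
    refine IsGreatest.csSup_eq ⟨?_, ?_⟩
    · obtain ⟨w, hw, hmax⟩ :=
        exists_mem_Wset_of_quantile T (fun i => (hp i).le) hsum hlt hle
      refine ⟨w, hw, ?_⟩
      simp only [sum_eq_of_mem_Wset T hw c, hmax]
    · rintro _ ⟨w, hw, rfl⟩
      simp only [sum_eq_of_mem_Wset T hw c]
      gcongr with i
      · exact (hp i).le
      · exact (mul_le_mul_of_nonneg_right (le_max_left _ 0) (hw.1 i).1).trans
          (mul_le_of_le_one_right (le_max_right _ _) (hw.1 i).2)
  exact ⟨hsup, by rw [dEag, hsup]⟩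
end

section
/- Let α ∈ [0,1). Strong linear programming duality holds between the primal problem min{(1−α)·s + Σ_{i=1}^n θ_i : s ∈ ℝ, θ ∈ ℝ^n, θ_i ≥ 0 and θ_i + s·p_i ≥ T_i·p_i for all i} and the dual problem max{Σ_{i=1}^n T_i w_i p_i : w ∈ W_α}: the infimum of the primal objective over its feasible set equals the supremum of the dual objective over W_α, and both optimal values are attained. -/
open Finset in
/-- A weighted upper quantile of `T` is attained at one of its values: the mass strictly above
`T j` is at most `m`, and the mass at or above `T j` is at least `m`. -/
theorem exists_upper_quantile {ι : Type*} [Fintype ι] [Nonempty ι] (p T : ι → ℝ) {m : ℝ}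
    (hm : 0 ≤ m) (hm_le : m ≤ ∑ i, p i) :
    ∃ j, ∑ i with T j < T i, p i ≤ m ∧ m ≤ ∑ i with T j ≤ T i, p i := by
  classical
  obtain ⟨a, -, ha⟩ := exists_max_image univ T univ_nonempty
  have ha_mem : a ∈ univ.filter fun j => ∑ i with T j < T i, p i ≤ m := by
    rw [mem_filter, filter_false_of_mem fun i hi => not_lt.2 (ha i hi)]
    simpa using hm
  obtain ⟨j, hj, hj_min⟩ := exists_min_image _ T ⟨a, ha_mem⟩
  refine ⟨j, (mem_filter.1 hj).2, ?_⟩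
  rcases (univ.filter fun i => T i < T j).eq_empty_or_nonempty with h | h
  · rw [filter_true_of_mem fun i hi => not_lt.1 (filter_eq_empty_iff.1 h hi)]
    exact hm_le
  · obtain ⟨k, hk, hk_max⟩ := exists_max_image _ T h
    have hkj : T k < T j := (mem_filter.1 hk).2
    have hk_mass : m < ∑ i with T k < T i, p i := by
      by_contra! hle
      exact (hj_min k (mem_filter.2 ⟨mem_univ k, hle⟩)).not_gt hkj
    have h_filter : (univ.filter fun i => T k < T i) = univ.filter fun i => T j ≤ T i := by
      refine filter_congr fun i _ => ⟨fun hi => ?_, hkj.trans_le⟩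
      by_contra! hij
      exact (hk_max i (mem_filter.2 ⟨mem_univ i, hij⟩)).not_gt hi
    exact h_filter ▸ hk_mass.le

/-- Weak duality: every dual feasible value is at most every primal feasible value. -/
theorem dual_le_primal_of_mem_Wset {n : ℕ} {p T w θ : Fin n → ℝ} {α s : ℝ}
    (hw : w ∈ Wset p α) (hθ : ∀ i, 0 ≤ θ i ∧ T i * p i ≤ θ i + s * p i) :
    ∑ i, T i * w i * p i ≤ (1 - α) * s + ∑ i, θ i := by
  rw [← hw.2, Finset.sum_mul, ← Finset.sum_add_distrib]
  refine Finset.sum_le_sum fun i _ => ?_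
  obtain ⟨hw0, hw1⟩ := hw.1 i
  nlinarith [mul_le_mul_of_nonneg_left (hθ i).2 hw0, mul_le_mul_of_nonneg_right hw1 (hθ i).1]

/-- There are a threshold `s` and a dual feasible `w` which is `1` where `T` exceeds `s` and `0`
where `T` is below `s`. -/
theorem exists_mem_Wset_threshold {n : ℕ} (hn : 1 ≤ n) (p T : Fin n → ℝ)
    (hp : ∀ i, 0 < p i) (hsum : ∑ i, p i = 1) {α : ℝ} (h0 : 0 ≤ α) (h1 : α < 1) :
    ∃ s, ∃ w ∈ Wset p α, (∀ i, s < T i → w i = 1) ∧ ∀ i, T i < s → w i = 0 := by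
  have : Nonempty (Fin n) := ⟨⟨0, hn⟩⟩
  obtain ⟨j, h_above, h_atLeast⟩ :=
    exists_upper_quantile p T (sub_nonneg.2 h1.le) (by linarith : 1 - α ≤ ∑ i, p i)
  set A := ∑ i with T j < T i, p i
  set B := ∑ i with T i = T j, p i with hB
  have hB_pos : 0 < B := Finset.sum_pos (fun i _ => hp i) ⟨j, by simp⟩
  have h_split : ∑ i with T j ≤ T i, p i = A + B := by
    simp only [A, B, Finset.sum_filter, ← Finset.sum_add_distrib]
    refine Finset.sum_congr rfl fun i _ => ?_
    rcases lt_trichotomy (T i) (T j) with h | h | h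
    · simp [h.not_ge, h.not_gt, h.ne]
    · simp [h]
    · simp [h.le, h, h.ne']
  have hc0 : 0 ≤ (1 - α - A) / B := div_nonneg (by linarith) hB_pos.le
  have hc1 : (1 - α - A) / B ≤ 1 := (div_le_one hB_pos).2 (by linarith)
  refine ⟨T j, fun i => if T j < T i then 1 else if T i = T j then (1 - α - A) / B else 0,
    ⟨fun i => ?_, ?_⟩, fun i hi => by simp [hi], fun i hi => by simp [hi.not_gt, hi.ne]⟩
  · dsimp only
    split_ifs <;> constructor <;> linarith
  · calc
      _ = A + (1 - α - A) / B * B := by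
        simp only [A, hB, Finset.sum_filter, Finset.mul_sum, ← Finset.sum_add_distrib]
        refine Finset.sum_congr rfl fun i _ => ?_
        rcases lt_trichotomy (T i) (T j) with h | h | h
        · simp [h.not_gt, h.ne]
        · simp [h]
        · simp [h, h.ne']
      _ = 1 - α := by rw [div_mul_cancel₀ _ hB_pos.ne']; ring

/-- Strong LP duality with attainment: there is a common value `v` which is the
attained minimum of the primal objective `(1−α)·s + Σ_i θ_i` over the primal
feasible region `{(s,θ) : θ_i ≥ 0, θ_i + s·p_i ≥ T_i·p_i}` and the attained
maximum of the dual objective `Σ_i T_i w_i p_i` over `W_α`. -/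
theorem strong_LP_duality_discrete_CVaR
    {n : ℕ} (hn : 1 ≤ n) (p T : Fin n → ℝ)
    (hp : ∀ i, 0 < p i) (hsum : ∑ i, p i = 1)
    (α : ℝ) (h0 : 0 ≤ α) (h1 : α < 1) :
    ∃ v : ℝ,
      IsLeast ((fun sθ : ℝ × (Fin n → ℝ) => (1 - α) * sθ.1 + ∑ i, sθ.2 i) ''
        {sθ : ℝ × (Fin n → ℝ) |
          ∀ i, 0 ≤ sθ.2 i ∧ T i * p i ≤ sθ.2 i + sθ.1 * p i}) v ∧
      IsGreatest ((fun w => ∑ i, T i * w i * p i) '' Wset p α) v := by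
  obtain ⟨s, w, hw, hw_above, hw_below⟩ := exists_mem_Wset_threshold hn p T hp hsum h0 h1
  set θ : Fin n → ℝ := fun i => max (T i - s) 0 * p i with hθ_def
  have hθ : ∀ i, 0 ≤ θ i ∧ T i * p i ≤ θ i + s * p i := fun i =>
    ⟨mul_nonneg (le_max_right _ _) (hp i).le, by
      nlinarith [mul_le_mul_of_nonneg_right (le_max_left (T i - s) 0) (hp i).le]⟩
  have h_eq : ∑ i, T i * w i * p i = (1 - α) * s + ∑ i, θ i := by
    rw [← hw.2, Finset.sum_mul, ← Finset.sum_add_distrib]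
    refine Finset.sum_congr rfl fun i _ => ?_
    simp only [hθ_def]
    rcases lt_trichotomy (T i) s with h | h | h
    · rw [hw_below i h, max_eq_right (by linarith)]; ring
    · rw [h, sub_self, max_self]; ring
    · rw [hw_above i h, max_eq_left (by linarith)]; ring
  refine ⟨∑ i, T i * w i * p i, ⟨⟨(s, θ), hθ, h_eq.symm⟩, ?_⟩, ⟨w, hw, rfl⟩, ?_⟩
  · rintro _ ⟨⟨s', θ'⟩, hθ', rfl⟩
    exact dual_le_primal_of_mem_Wset hw hθ'
  · rintro _ ⟨w', hw', rfl⟩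
    exact h_eq ▸ dual_le_primal_of_mem_Wset hw' hθ
end

section
/- Let α ∈ [0,1). Then the Rockafellar–Uryasev representation holds in the discrete setting: inf_{η ∈ ℝ} ( (1−α)·η + Σ_{i=1}^n p_i · max(T_i − η, 0) ) = sup{Σ_{i=1}^n T_i w_i p_i : w ∈ W_α}. Equivalently, min_η ( η + (1/(1−α)) Σ_{i=1}^n p_i · max(T_i − η, 0) ) = (1/(1−α)) · sup{Σ_{i=1}^n T_i w_i p_i : w ∈ W_α}. -/
/-- Weak duality: every `η` bounds the weighted sum of every `w ∈ W_α` from above. -/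
theorem sum_le_of_mem_Wset {n : ℕ} {p : Fin n → ℝ} (T : Fin n → ℝ) (hp : ∀ i, 0 ≤ p i)
    {α : ℝ} {w : Fin n → ℝ} (hw : w ∈ Wset p α) (η : ℝ) :
    ∑ i, T i * w i * p i ≤ (1 - α) * η + ∑ i, p i * max (T i - η) 0 := by
  obtain ⟨hw01, hws⟩ := hw
  rw [← hws, Finset.sum_mul, ← Finset.sum_add_distrib]
  refine Finset.sum_le_sum fun i _ => ?_
  obtain ⟨hw0, hw1⟩ := hw01 i
  have h : w i * (T i - η) ≤ max (T i - η) 0 :=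
    (mul_le_mul_of_nonneg_left (le_max_left _ _) hw0).trans
      (mul_le_of_le_one_left (le_max_right _ _) hw1)
  linarith [mul_le_mul_of_nonneg_left h (hp i)]

/-- Existence of a quantile: some value `T k` has upper tail mass at most `c` when excluded and
at least `c` when included. -/
theorem exists_quantile_s9 {n : ℕ} (p T : Fin n → ℝ) (hsum : ∑ i, p i = 1)
    {c : ℝ} (hc0 : 0 ≤ c) (hc1 : c ≤ 1) :
    ∃ k, ∑ i with T k < T i, p i ≤ c ∧ c ≤ ∑ i with T k ≤ T i, p i := by
  have hne : (Finset.univ : Finset (Fin n)).Nonempty := by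
    by_contra h
    simp [Finset.not_nonempty_iff_eq_empty.mp h] at hsum
  obtain ⟨m, -, hm⟩ := Finset.exists_max_image Finset.univ T hne
  have hmS : m ∈ Finset.univ.filter fun k => ∑ i with T k < T i, p i ≤ c := by
    have : Finset.univ.filter (fun i => T m < T i) = ∅ := by
      ext i
      simpa using hm i (Finset.mem_univ i)
    simpa [this] using hc0
  obtain ⟨k, hk, hkmin⟩ := Finset.exists_min_image _ T ⟨m, hmS⟩
  refine ⟨k, (Finset.mem_filter.mp hk).2, ?_⟩
  by_contra! hlt
  rcases (Finset.univ.filter fun i => T i < T k).eq_empty_or_nonempty with he | hlow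
  · have : Finset.univ.filter (fun i => T k ≤ T i) = Finset.univ := by
      rw [Finset.filter_eq_self]
      intro i hi
      exact not_lt.mp (Finset.filter_eq_empty_iff.mp he hi)
    rw [this, hsum] at hlt
    linarith
  · obtain ⟨j, hj, hjmax⟩ := Finset.exists_max_image _ T hlow
    have hjk : T j < T k := (Finset.mem_filter.mp hj).2
    have heq : Finset.univ.filter (fun i => T j < T i) =
        Finset.univ.filter (fun i => T k ≤ T i) := by
      refine Finset.filter_congr fun i _ => ⟨fun h => ?_, fun h => hjk.trans_le h⟩
      by_contra! hik
      exact absurd (hjmax i (by simpa using hik)) (not_le.mpr h)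
    have := hkmin j (by simpa [heq] using hlt.le)
    linarith

/-- Strong duality: some `η` and some `w ∈ W_α` attain the same value. -/
theorem exists_mem_Wset_sum_eq {n : ℕ} (p T : Fin n → ℝ)
    (hp : ∀ i, 0 < p i) (hsum : ∑ i, p i = 1) {α : ℝ} (h0 : 0 ≤ α) (h1 : α ≤ 1) :
    ∃ η, ∃ w ∈ Wset p α,
      ∑ i, T i * w i * p i = (1 - α) * η + ∑ i, p i * max (T i - η) 0 := by
  obtain ⟨k, hgt, hge⟩ := exists_quantile_s9 p T hsum (c := 1 - α) (by linarith) (by linarith)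
  have hsplit : ∑ i with T k ≤ T i, p i =
      ∑ i with T k < T i, p i + ∑ i with T i = T k, p i := by
    simp only [Finset.sum_filter, ← Finset.sum_add_distrib]
    refine Finset.sum_congr rfl fun i _ => ?_
    rcases lt_trichotomy (T i) (T k) with h | h | h
    · simp [h.not_ge, h.not_gt, h.ne]
    · simp [h]
    · simp [h.le, h, h.ne']
  set A := ∑ i with T k < T i, p i with hA
  set B := ∑ i with T i = T k, p i with hB
  have hBpos : 0 < B := Finset.sum_pos (fun i _ => hp i) ⟨k, by simp⟩
  set θ := (1 - α - A) / B
  have hθ0 : 0 ≤ θ := div_nonneg (by linarith) hBpos.le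
  have hθ1 : θ ≤ 1 := (div_le_one hBpos).mpr (by linarith)
  have hθB : θ * B = 1 - α - A := div_mul_cancel₀ _ hBpos.ne'
  let w : Fin n → ℝ := fun i => if T k < T i then 1 else if T i = T k then θ else 0
  have hws : ∑ i, w i * p i = 1 - α := by
    have : ∑ i, w i * p i = A + θ * B := by
      simp only [hA, hB, Finset.sum_filter, Finset.mul_sum, ← Finset.sum_add_distrib]
      refine Finset.sum_congr rfl fun i _ => ?_
      rcases lt_trichotomy (T i) (T k) with h | h | h
      · simp [w, h.not_gt, h.ne]
      · simp [w, h]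
      · simp [w, h, h.ne']
    linarith
  refine ⟨T k, w, ⟨fun i => ?_, hws⟩, ?_⟩
  · simp only [w]
    split_ifs
    · simp
    · exact ⟨hθ0, hθ1⟩
    · simp
  · rw [← hws, Finset.sum_mul, ← Finset.sum_add_distrib]
    refine Finset.sum_congr rfl fun i _ => ?_
    rcases lt_trichotomy (T i) (T k) with h | h | h
    · simp [w, h.not_gt, h.ne, h.le]
    · simp [w, h]
      ring
    · simp [w, h, h.le]
      ring

/-- Rockafellar–Uryasev representation in the discrete setting:
`inf_η ((1−α)·η + Σ_i p_i·max(T_i − η, 0)) = sup{Σ_i T_i w_i p_i : w ∈ W_α}`,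
and equivalently
`inf_η (η + (1/(1−α)) Σ_i p_i·max(T_i − η, 0)) = (1/(1−α))·sup{…}`. -/
theorem rockafellar_uryasev_discrete
    {n : ℕ} (hn : 1 ≤ n) (p T : Fin n → ℝ)
    (hp : ∀ i, 0 < p i) (hsum : ∑ i, p i = 1)
    (α : ℝ) (h0 : 0 ≤ α) (h1 : α < 1) :
    (⨅ η : ℝ, ((1 - α) * η + ∑ i, p i * max (T i - η) 0)) =
      sSup ((fun w => ∑ i, T i * w i * p i) '' Wset p α) ∧
    (⨅ η : ℝ, (η + (1 / (1 - α)) * ∑ i, p i * max (T i - η) 0)) =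
      (1 / (1 - α)) * sSup ((fun w => ∑ i, T i * w i * p i) '' Wset p α) := by
  obtain ⟨η₀, w₀, hw₀, heq⟩ := exists_mem_Wset_sum_eq p T hp hsum h0 h1.le
  have hweak := fun w (hw : w ∈ Wset p α) η => sum_le_of_mem_Wset T (fun i => (hp i).le) hw η
  have hsup : IsGreatest ((fun w => ∑ i, T i * w i * p i) '' Wset p α)
      (∑ i, T i * w₀ i * p i) := by
    refine ⟨⟨w₀, hw₀, rfl⟩, ?_⟩
    rintro _ ⟨w, hw, rfl⟩
    exact heq ▸ hweak w hw η₀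
  have hinf : IsLeast (Set.range fun η : ℝ => (1 - α) * η + ∑ i, p i * max (T i - η) 0)
      (∑ i, T i * w₀ i * p i) := by
    refine ⟨⟨η₀, heq.symm⟩, ?_⟩
    rintro _ ⟨η, rfl⟩
    exact hweak w₀ hw₀ η
  have hmain : (⨅ η : ℝ, ((1 - α) * η + ∑ i, p i * max (T i - η) 0)) =
      sSup ((fun w => ∑ i, T i * w i * p i) '' Wset p α) :=
    hinf.csInf_eq.trans hsup.csSup_eq.symm
  have hα : 0 < 1 - α := sub_pos.mpr h1
  refine ⟨hmain, ?_⟩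
  rw [← hmain, Real.mul_iInf_of_nonneg (one_div_pos.mpr hα).le]
  congr 1
  ext η
  field_simp
end

section
/- Let μ be a finitely supported probability measure on ℝ whose support is contained in [0,∞), and let J(t) = ∫_0^t F(u) du (with the convention J(t) = −∫_t^0 F(u) du for t < 0). Then for every p ∈ [0,1], the integrated quantile function is the Legendre transform of the integrated distribution function: sup_{t ∈ ℝ} ( t·p − J(t) ) = ∫_0^p F⁻¹(s) ds. -/
open MeasureTheory

section QuantileFunction

variable {μ : Measure ℝ}

lemma measure_Iic_toReal_of_neg (hsupp : μ (Set.Iio 0) = 0) {u : ℝ} (hu : u < 0) :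
    (μ (Set.Iic u)).toReal = 0 := by
  rw [measure_mono_null (Set.Iic_subset_Iio.2 hu) hsupp, ENNReal.toReal_zero]

lemma nonneg_of_pos_le_measure_Iic (hsupp : μ (Set.Iio 0) = 0) {q u : ℝ} (hq : 0 < q)
    (h : q ≤ (μ (Set.Iic u)).toReal) : 0 ≤ u := by
  by_contra! hneg
  rw [measure_Iic_toReal_of_neg hsupp hneg] at h
  exact hq.not_ge h

lemma Finv_zero : Finv μ 0 = 0 := by
  simp [Finv]

lemma Finv_nonneg (hsupp : μ (Set.Iio 0) = 0) {q : ℝ} (hq : 0 ≤ q) : 0 ≤ Finv μ q := by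
  rcases hq.eq_or_lt with rfl | hq0
  · rw [Finv_zero]
  · exact Real.sInf_nonneg fun v hv => nonneg_of_pos_le_measure_Iic hsupp hq0 hv

variable [IsProbabilityMeasure μ]

lemma monotone_measure_Iic_toReal : Monotone fun u : ℝ => (μ (Set.Iic u)).toReal :=
  fun _ _ h => ENNReal.toReal_mono (measure_ne_top _ _) (measure_mono (Set.Iic_subset_Iic.2 h))

lemma exists_measure_Iic_toReal_eq_one
    (hfin : ∃ s : Finset ℝ, μ ((↑s : Set ℝ)ᶜ) = 0) :
    ∃ M : ℝ, 0 ≤ M ∧ (μ (Set.Iic M)).toReal = 1 := by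
  obtain ⟨s, hs⟩ := hfin
  obtain ⟨M, hM⟩ := s.bddAbove
  refine ⟨max M 0, le_max_right _ _, ?_⟩
  have h : μ (Set.Iic (max M 0))ᶜ = 0 := by
    refine measure_mono_null (Set.compl_subset_compl.2 fun x hx => ?_) hs
    exact (hM hx).trans (le_max_left _ _)
  rw [(prob_compl_eq_zero_iff measurableSet_Iic).1 h, ENNReal.toReal_one]

lemma le_measure_Iic_of_forall_gt {q t : ℝ}
    (h : ∀ u, t < u → q ≤ (μ (Set.Iic u)).toReal) : q ≤ (μ (Set.Iic t)).toReal := by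
  have hr := ((ProbabilityTheory.cdf μ).right_continuous t).mono Set.Ioi_subset_Ici_self
  have hq : q ≤ ProbabilityTheory.cdf μ t := by
    refine ge_of_tendsto hr ?_
    filter_upwards [self_mem_nhdsWithin] with u hu
    rw [ProbabilityTheory.cdf_eq_real]
    exact h u hu
  rwa [ProbabilityTheory.cdf_eq_real] at hq

/-- The Galois connection between the quantile function and the distribution function. -/
lemma Finv_le_iff (hfin : ∃ s : Finset ℝ, μ ((↑s : Set ℝ)ᶜ) = 0)
    (hsupp : μ (Set.Iio 0) = 0) {q t : ℝ} (hq : q ∈ Set.Icc (0 : ℝ) 1) (ht : 0 ≤ t) :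
    Finv μ q ≤ t ↔ q ≤ (μ (Set.Iic t)).toReal := by
  rcases hq.1.eq_or_lt with rfl | hq0
  · simp [Finv_zero, ht]
  refine ⟨fun h => le_measure_Iic_of_forall_gt fun u hu => ?_, fun h =>
    csInf_le ⟨0, fun v hv => nonneg_of_pos_le_measure_Iic hsupp hq0 hv⟩ h⟩
  obtain ⟨M, -, hM⟩ := exists_measure_Iic_toReal_eq_one hfin
  have hne : {t : ℝ | q ≤ (μ (Set.Iic t)).toReal}.Nonempty := ⟨M, hq.2.trans_eq hM.symm⟩
  obtain ⟨v, hv, hvu⟩ := exists_lt_of_csInf_lt hne (h.trans_lt hu)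
  exact le_trans hv (monotone_measure_Iic_toReal hvu.le)

lemma monotoneOn_Finv (hfin : ∃ s : Finset ℝ, μ ((↑s : Set ℝ)ᶜ) = 0)
    (hsupp : μ (Set.Iio 0) = 0) : MonotoneOn (Finv μ) (Set.Icc 0 1) := by
  intro a ha b hb hab
  have h0 := Finv_nonneg hsupp hb.1
  exact (Finv_le_iff hfin hsupp ha h0).2 (hab.trans ((Finv_le_iff hfin hsupp hb h0).1 le_rfl))

/-- The integrated quantile function as the integral of the positive part of `p - F`. -/
lemma integral_Finv_eq (hfin : ∃ s : Finset ℝ, μ ((↑s : Set ℝ)ᶜ) = 0)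
    (hsupp : μ (Set.Iio 0) = 0) {p : ℝ} (hp : p ∈ Set.Icc (0 : ℝ) 1) :
    ∫ s in (0 : ℝ)..p, Finv μ s =
      ∫ u in Set.Ioi (0 : ℝ), max (p - (μ (Set.Iic u)).toReal) 0 := by
  have hint : IntegrableOn (Finv μ) (Set.Ioc 0 p) := by
    refine (intervalIntegrable_iff_integrableOn_Ioc_of_le hp.1).1 ?_
    refine MonotoneOn.intervalIntegrable ?_
    rw [Set.uIcc_of_le hp.1]
    exact (monotoneOn_Finv hfin hsupp).mono (Set.Icc_subset_Icc_right hp.2)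
  have hnn : 0 ≤ᵐ[volume.restrict (Set.Ioc 0 p)] Finv μ := by
    filter_upwards [ae_restrict_mem measurableSet_Ioc] with s hs
    exact Finv_nonneg hsupp hs.1.le
  rw [intervalIntegral.integral_of_le hp.1, hint.integral_eq_integral_meas_lt hnn]
  refine setIntegral_congr_fun measurableSet_Ioi fun u hu => ?_
  have hset : {s | u < Finv μ s} ∩ Set.Ioc 0 p = Set.Ioc (μ (Set.Iic u)).toReal p := by
    ext s
    have key : ∀ hs : s ∈ Set.Icc (0 : ℝ) 1, u < Finv μ s ↔ (μ (Set.Iic u)).toReal < s :=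
      fun hs => by simpa using (Finv_le_iff hfin hsupp hs (le_of_lt hu)).not
    constructor
    · rintro ⟨h, h0, h1⟩
      exact ⟨(key ⟨h0.le, h1.trans hp.2⟩).1 h, h1⟩
    · rintro ⟨h, h1⟩
      have h0 : 0 < s := ENNReal.toReal_nonneg.trans_lt h
      exact ⟨(key ⟨h0.le, h1.trans hp.2⟩).2 h, h0, h1⟩
  rw [measureReal_restrict_apply' measurableSet_Ioc, hset, Real.volume_real_Ioc]

lemma integrableOn_posPart_sub_measure_Iic
    (hfin : ∃ s : Finset ℝ, μ ((↑s : Set ℝ)ᶜ) = 0) {p : ℝ} (hp : p ≤ 1) :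
    IntegrableOn (fun u : ℝ => max (p - (μ (Set.Iic u)).toReal) 0) (Set.Ioi 0) := by
  obtain ⟨M, hM0, hM⟩ := exists_measure_Iic_toReal_eq_one hfin
  have hanti : Antitone fun u : ℝ => max (p - (μ (Set.Iic u)).toReal) 0 := fun a b hab =>
    max_le_max (sub_le_sub_left (monotone_measure_Iic_toReal hab) p) le_rfl
  have hIoc := (intervalIntegrable_iff_integrableOn_Ioc_of_le hM0).1
    (hanti.intervalIntegrable (μ := volume) (a := 0) (b := M))
  refine hIoc.of_forall_sdiff_eq_zero measurableSet_Ioi fun u hu => ?_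
  have hMu : M ≤ u := by
    by_contra! h
    exact hu.2 ⟨hu.1, h.le⟩
  have h1 : (μ (Set.Iic M)).toReal ≤ (μ (Set.Iic u)).toReal := monotone_measure_Iic_toReal hMu
  exact max_eq_right (by linarith)

lemma mul_sub_integral_measure_Iic_eq (t p : ℝ) :
    t * p - ∫ u in (0 : ℝ)..t, (μ (Set.Iic u)).toReal =
      ∫ u in (0 : ℝ)..t, (p - (μ (Set.Iic u)).toReal) := by
  rw [intervalIntegral.integral_sub intervalIntegrable_const
    monotone_measure_Iic_toReal.intervalIntegrable]
  simp

end QuantileFunction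

/-- For a finitely supported probability measure with support in `[0,∞)`, the
integrated quantile function is the Legendre transform of the integrated
distribution function `J(t) = ∫_0^t F(u) du`:
`sup_t (t·p − J(t)) = ∫_0^p F⁻¹(s) ds` for every `p ∈ [0,1]`. -/
theorem integrated_quantile_function_legendre_transform
    (μ : Measure ℝ) [IsProbabilityMeasure μ]
    (hfin : ∃ s : Finset ℝ, μ ((↑s : Set ℝ)ᶜ) = 0)
    (hsupp : μ (Set.Iio 0) = 0) :
    ∀ p ∈ Set.Icc (0:ℝ) 1,
      (⨆ t : ℝ, (t * p - ∫ u in (0:ℝ)..t, (μ (Set.Iic u)).toReal)) =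
        ∫ s in (0:ℝ)..p, Finv μ s := by
  intro p hp
  rw [integral_Finv_eq hfin hsupp hp]
  have hint := integrableOn_posPart_sub_measure_Iic (μ := μ) hfin hp.2
  have hmono : Monotone fun u : ℝ => (μ (Set.Iic u)).toReal := monotone_measure_Iic_toReal
  have hF : ∀ t, IntervalIntegrable (fun u : ℝ => p - (μ (Set.Iic u)).toReal) volume 0 t :=
    fun t => intervalIntegrable_const.sub hmono.intervalIntegrable
  refine IsLUB.ciSup_eq (IsGreatest.isLUB ⟨⟨Finv μ p, ?_⟩, ?_⟩)
  · have h0 : 0 ≤ Finv μ p := Finv_nonneg hsupp hp.1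
    simp only
    rw [mul_sub_integral_measure_Iic_eq, intervalIntegral.integral_of_le h0,
      integral_Ioc_eq_integral_Ioo,
      setIntegral_eq_of_subset_of_forall_sdiff_eq_zero measurableSet_Ioi
        (Set.Ioo_subset_Ioi_self : Set.Ioo 0 (Finv μ p) ⊆ Set.Ioi 0)]
    · refine setIntegral_congr_fun measurableSet_Ioo fun u hu => (max_eq_left ?_).symm
      have := (Finv_le_iff hfin hsupp hp hu.1.le).not.1 hu.2.not_ge
      linarith
    · intro u hu
      have hle : Finv μ p ≤ u := by
        by_contra! h
        exact hu.2 ⟨hu.1, h⟩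
      have := (Finv_le_iff hfin hsupp hp (le_of_lt hu.1)).1 hle
      exact max_eq_right (by linarith)
  · rintro _ ⟨t, rfl⟩
    simp only
    rw [mul_sub_integral_measure_Iic_eq]
    rcases le_total 0 t with ht | ht
    · rw [intervalIntegral.integral_of_le ht]
      calc ∫ u in Set.Ioc 0 t, (p - (μ (Set.Iic u)).toReal)
          ≤ ∫ u in Set.Ioc 0 t, max (p - (μ (Set.Iic u)).toReal) 0 :=
            setIntegral_mono ((intervalIntegrable_iff_integrableOn_Ioc_of_le ht).1 (hF t))
              (hint.mono_set Set.Ioc_subset_Ioi_self) fun u => le_max_left _ _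
        _ ≤ _ := setIntegral_mono_set hint (ae_of_all _ fun u => le_max_right _ _)
            Set.Ioc_subset_Ioi_self.eventuallyLE
    · have hneg : ∫ u in (0 : ℝ)..t, (p - (μ (Set.Iic u)).toReal) ≤ 0 := by
        rw [intervalIntegral.integral_of_ge ht, integral_Ioc_eq_integral_Ioo, neg_nonpos]
        refine setIntegral_nonneg measurableSet_Ioo fun u hu => ?_
        rw [measure_Iic_toReal_of_neg hsupp hu.2, sub_zero]
        exact hp.1
      exact hneg.trans (integral_nonneg fun u => le_max_right _ _)
end
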